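/- Lemma 4 (existence of a KKT dual certificate): Let η > 0 and let x* be an optimal solution of the penalized problem (P_η) that satisfies the MFCQ condition. Then there exists an m×m real symmetric positive semidefinite matrix Λ* such that c + 2η(x* − x̌) + Σₖ tr(Kₖ Λ*) eₖ + 2α(Λ*)x* = 0 and Λ*·p(x*, x* x*ᵀ) = 0 (the zero matrix). -/

import Mathlib

/-!
Put `S y = -p(y, yyᵀ)` and let `f` be the objective. A direction `b` for which `S x + S'(x) b`
lies in the interior of the semidefinite cone stays feasible along a short segment, so local
optimality gives `f'(x) b ≥ 0`. Hence, if `f'(x) ≠ 0`, that interior is disjoint from the convex set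
of all `S x + S'(x) b` with `f'(x) b < 0`, and Hahn–Banach separates the two by a nonzero functional
`ψ`, nonnegative on the cone and with `ψ (S x) = 0`. The functional `ψ ∘ S'(x)` is nonpositive
wherever `f'(x)` is negative, so it is a nonnegative multiple of `f'(x)`; MFCQ makes the multiple
positive, and rescaling `ψ` gives `f'(x) = ψ ∘ S'(x)`.

Positive semidefinite matrices have no interior in the space of all matrices, so the cone of all
matrices with nonnegative quadratic form takes their place. It contains every `A - Aᵀ`, which
forces the matrix `Λ` representing `ψ` to be symmetric. Finally `tr (Λ * S x) = 0` with both factors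
positive semidefinite gives `Λ * S x = 0`.
-/

open Matrix

noncomputable section

/-- Euclidean (ℓ₂) norm of a finite real vector. -/
def vecNorm {k : ℕ} (u : Fin k → ℝ) : ℝ := Real.sqrt (∑ i, u i ^ 2)

/-- The matrix pencil `p(x, X) = F₀ + ∑ₖ xₖ Kₖ + ∑ᵢ ∑ⱼ Xᵢⱼ Lᵢⱼ`. -/
def pencil {n m : ℕ} (F0 : Matrix (Fin m) (Fin m) ℝ)
    (K : Fin n → Matrix (Fin m) (Fin m) ℝ)
    (L : Fin n → Fin n → Matrix (Fin m) (Fin m) ℝ)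
    (x : Fin n → ℝ) (X : Matrix (Fin n) (Fin n) ℝ) : Matrix (Fin m) (Fin m) ℝ :=
  F0 + ∑ k, x k • K k + ∑ i, ∑ j, X i j • L i j

/-- Negative semidefinite real matrix. -/
def NegSemidef' {k : ℕ} (A : Matrix (Fin k) (Fin k) ℝ) : Prop := (-A).PosSemidef

/-- Negative definite real matrix. -/
def NegDef' {k : ℕ} (A : Matrix (Fin k) (Fin k) ℝ) : Prop := (-A).PosDef

/-- The BMI feasible set `F = {x : p(x, xxᵀ) ⪯ 0}`. -/
def feasSet {n m : ℕ} (F0 : Matrix (Fin m) (Fin m) ℝ)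
    (K : Fin n → Matrix (Fin m) (Fin m) ℝ)
    (L : Fin n → Fin n → Matrix (Fin m) (Fin m) ℝ) : Set (Fin n → ℝ) :=
  {x | NegSemidef' (pencil F0 K L x (vecMulVec x x))}

/-- Feasibility distance `d_F(x) = inf {‖x − a‖₂ : a ∈ F}`. -/
def distF {n m : ℕ} (F0 : Matrix (Fin m) (Fin m) ℝ)
    (K : Fin n → Matrix (Fin m) (Fin m) ℝ)
    (L : Fin n → Fin n → Matrix (Fin m) (Fin m) ℝ) (x : Fin n → ℝ) : ℝ :=
  sInf {r | ∃ a ∈ feasSet F0 K L, r = vecNorm (x - a)}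

/-- `δₖ(x) = 2 ∑ᵢ xᵢ L_{k i}`. -/
def deltaMat {n m : ℕ} (L : Fin n → Fin n → Matrix (Fin m) (Fin m) ℝ)
    (k : Fin n) (x : Fin n → ℝ) : Matrix (Fin m) (Fin m) ℝ :=
  (2 : ℝ) • ∑ i, x i • L k i

/-- The MFCQ condition at a point `x`. -/
def MFCQ {n m : ℕ} (F0 : Matrix (Fin m) (Fin m) ℝ)
    (K : Fin n → Matrix (Fin m) (Fin m) ℝ)
    (L : Fin n → Fin n → Matrix (Fin m) (Fin m) ℝ) (x : Fin n → ℝ) : Prop :=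
  ∃ b : Fin n → ℝ,
    NegDef' (pencil F0 K L x (vecMulVec x x) + ∑ k, b k • (K k + deltaMat L k x))

/-- Smallest eigenvalue of a symmetric real matrix, via the Rayleigh quotient. -/
def lambdaMin {k : ℕ} (A : Matrix (Fin k) (Fin k) ℝ) : ℝ :=
  sInf {r | ∃ u : Fin k → ℝ, vecNorm u = 1 ∧ r = u ⬝ᵥ (A *ᵥ u)}

/-- The G-MFCQ function `s(x)`. -/
def sFun {n m : ℕ} (K : Fin n → Matrix (Fin m) (Fin m) ℝ)
    (L : Fin n → Fin n → Matrix (Fin m) (Fin m) ℝ) (x : Fin n → ℝ) : ℝ :=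
  sSup {r | ∃ b : Fin n → ℝ, vecNorm b = 1 ∧
    r = lambdaMin (-(∑ k, b k • (K k + deltaMat L k x)))}

/-- Spectral norm of a real matrix. -/
def specNorm {k : ℕ} (A : Matrix (Fin k) (Fin k) ℝ) : ℝ :=
  sSup {r | ∃ v : Fin k → ℝ, vecNorm v = 1 ∧ r = vecNorm (A *ᵥ v)}

/-- Pencil norm `‖p‖₂`. -/
def pencilNorm {n m : ℕ} (L : Fin n → Fin n → Matrix (Fin m) (Fin m) ℝ) : ℝ :=
  sSup {r | ∃ u : Fin m → ℝ, vecNorm u = 1 ∧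
    r = specNorm (Matrix.of fun i j => u ⬝ᵥ (L i j *ᵥ u))}

/-- Cone `C₁`: positive semidefinite matrices. -/
def coneC1 (n : ℕ) : Set (Matrix (Fin n) (Fin n) ℝ) := {H | H.PosSemidef}

/-- Cone `C₂`: symmetric matrices with `Hᵢᵢ ≥ 0` and `Hᵢᵢ Hⱼⱼ ≥ Hᵢⱼ²`. -/
def coneC2 (n : ℕ) : Set (Matrix (Fin n) (Fin n) ℝ) :=
  {H | H.IsSymm ∧ ∀ i j, 0 ≤ H i i ∧ H i j ^ 2 ≤ H i i * H j j}

/-- Cone `C₃`: symmetric matrices with `Hᵢᵢ ≥ 0` and `Hᵢᵢ + Hⱼⱼ ≥ 2|Hᵢⱼ|`. -/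
def coneC3 (n : ℕ) : Set (Matrix (Fin n) (Fin n) ℝ) :=
  {H | H.IsSymm ∧ ∀ i j, 0 ≤ H i i ∧ 2 * |H i j| ≤ H i i + H j j}

/-- Dual cone with respect to the trace inner product. -/
def dualCone {n : ℕ} (C : Set (Matrix (Fin n) (Fin n) ℝ)) :
    Set (Matrix (Fin n) (Fin n) ℝ) :=
  {Y | Y.IsSymm ∧ ∀ H ∈ C, 0 ≤ (Y * H).trace}

/-- `α(Λ)` : the n×n matrix with entries `⟨Lᵢⱼ, Λ⟩ = tr(Lᵢⱼ Λ)`. -/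
def alphaMat {n m : ℕ} (L : Fin n → Fin n → Matrix (Fin m) (Fin m) ℝ)
    (Λ : Matrix (Fin m) (Fin m) ℝ) : Matrix (Fin n) (Fin n) ℝ :=
  Matrix.of fun i j => (L i j * Λ).trace

/-- Objective of the penalized problem `(P_η)`. -/
def penObj {n : ℕ} (c xc : Fin n → ℝ) (η : ℝ) (x : Fin n → ℝ) : ℝ :=
  c ⬝ᵥ x + η * vecNorm (x - xc) ^ 2

/-- `x` is an optimal solution of the penalized problem `(P_η)`. -/
def IsOptPen {n m : ℕ} (F0 : Matrix (Fin m) (Fin m) ℝ)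
    (K : Fin n → Matrix (Fin m) (Fin m) ℝ)
    (L : Fin n → Fin n → Matrix (Fin m) (Fin m) ℝ)
    (c xc : Fin n → ℝ) (η : ℝ) (x : Fin n → ℝ) : Prop :=
  x ∈ feasSet F0 K L ∧ ∀ y ∈ feasSet F0 K L, penObj c xc η x ≤ penObj c xc η y

/-- Objective of the penalized convex relaxation `(R_{η,C})`. -/
def relObj {n : ℕ} (c xc : Fin n → ℝ) (η : ℝ) (x : Fin n → ℝ)
    (X : Matrix (Fin n) (Fin n) ℝ) : ℝ :=
  c ⬝ᵥ x + η * (X.trace - 2 * (xc ⬝ᵥ x) + xc ⬝ᵥ xc)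

/-- Feasibility for the relaxation with cone `C`. -/
def RelFeasible {n m : ℕ} (F0 : Matrix (Fin m) (Fin m) ℝ)
    (K : Fin n → Matrix (Fin m) (Fin m) ℝ)
    (L : Fin n → Fin n → Matrix (Fin m) (Fin m) ℝ)
    (C : Set (Matrix (Fin n) (Fin n) ℝ))
    (x : Fin n → ℝ) (X : Matrix (Fin n) (Fin n) ℝ) : Prop :=
  X.IsSymm ∧ NegSemidef' (pencil F0 K L x X) ∧ X - vecMulVec x x ∈ C

/-- `(x, X)` is an optimal solution of the penalized convex relaxation `(R_{η,C})`. -/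
def IsOptRel {n m : ℕ} (F0 : Matrix (Fin m) (Fin m) ℝ)
    (K : Fin n → Matrix (Fin m) (Fin m) ℝ)
    (L : Fin n → Fin n → Matrix (Fin m) (Fin m) ℝ)
    (c xc : Fin n → ℝ) (η : ℝ) (C : Set (Matrix (Fin n) (Fin n) ℝ))
    (x : Fin n → ℝ) (X : Matrix (Fin n) (Fin n) ℝ) : Prop :=
  RelFeasible F0 K L C x X ∧
    ∀ y Y, RelFeasible F0 K L C y Y → relObj c xc η x X ≤ relObj c xc η y Y

/-- The KKT conditions for `(P_η)` at `(x, Λ)`. -/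
def KKT {n m : ℕ} (F0 : Matrix (Fin m) (Fin m) ℝ)
    (K : Fin n → Matrix (Fin m) (Fin m) ℝ)
    (L : Fin n → Fin n → Matrix (Fin m) (Fin m) ℝ)
    (c xc : Fin n → ℝ) (η : ℝ)
    (x : Fin n → ℝ) (Λ : Matrix (Fin m) (Fin m) ℝ) : Prop :=
  Λ.IsSymm ∧ Λ.PosSemidef ∧
  c + (2 * η) • (x - xc) + (∑ k, ((K k * Λ).trace) • (Pi.single k 1 : Fin n → ℝ))
      + (2 : ℝ) • (alphaMat L Λ *ᵥ x) = 0 ∧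
  Λ * pencil F0 K L x (vecMulVec x x) = 0

open Filter Set Topology

lemma nonneg_and_nonneg_of_forall_pos_add_mul {a b : ℝ} (h : ∀ t > 0, 0 ≤ a + t * b) :
    0 ≤ a ∧ 0 ≤ b := by
  constructor
  · have hlim : Tendsto (fun t : ℝ => a + t * b) (𝓝[>] 0) (𝓝 (a + 0 * b)) :=
      (Continuous.tendsto (by fun_prop) 0).mono_left nhdsWithin_le_nhds
    simpa using ge_of_tendsto hlim (eventually_nhdsWithin_of_forall h)
  · by_contra! hb
    have := h ((|a| + 1) / -b) (div_pos (by positivity) (neg_pos.2 hb))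
    rw [div_mul_eq_mul_div, mul_div_assoc, div_neg, div_self hb.ne] at this
    linarith [le_abs_self a]

section Multiplier

variable {E W : Type*}

lemma exists_nonneg_smul_eq_of_forall_neg_imp_nonpos [AddCommGroup E] [Module ℝ E]
    {g h : E →ₗ[ℝ] ℝ} (hg : g ≠ 0) (hgh : ∀ b, g b < 0 → h b ≤ 0) : ∃ r : ℝ, 0 ≤ r ∧ h = r • g := by
  obtain ⟨b₁, hb₁⟩ := LinearMap.surjective hg (-1)
  have nonpos_of_mem_ker (b : E) (hb : g b = 0) : h b ≤ 0 := by
    have hline : ∀ t > (0 : ℝ), 0 ≤ -h b₁ + t * -h b := fun t _ => by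
      have := hgh (b₁ + t • b) (by simp [hb, hb₁])
      rw [map_add, map_smul, smul_eq_mul] at this
      linarith
    linarith [(nonneg_and_nonneg_of_forall_pos_add_mul hline).2]
  have hker : ⨅ _ : Unit, g.ker ≤ h.ker := by
    intro b hb
    have hb : g b = 0 := by simpa using hb
    refine le_antisymm (nonpos_of_mem_ker b hb) ?_
    simpa using nonpos_of_mem_ker (-b) (by simp [hb])
  have hspan := mem_span_of_iInf_ker_le_ker (L := fun _ : Unit => g) hker
  rw [range_const, Submodule.mem_span_singleton] at hspan
  obtain ⟨r, rfl⟩ := hspan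
  refine ⟨r, ?_, rfl⟩
  simpa [hb₁] using hgh b₁ (by simp [hb₁])

section LinearConstraint

variable [TopologicalSpace W] [AddCommGroup W] [Module ℝ W] [IsTopologicalAddGroup W]
  [ContinuousSMul ℝ W]

lemma pos_of_mem_interior_of_forall_nonneg {s : Set W} {ψ : StrongDual ℝ W} (hψ : ψ ≠ 0)
    (hs : ∀ w ∈ s, 0 ≤ ψ w) {w : W} (hw : w ∈ interior s) : 0 < ψ w := by
  suffices ψ '' interior s ⊆ Ioi 0 from this (mem_image_of_mem ψ hw)
  rw [← interior_Ici]
  refine interior_maximal (image_subset_iff.2 fun w hw => hs w (interior_subset hw)) ?_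
  exact ψ.isOpenMap_of_ne_zero hψ _ isOpen_interior

variable [AddCommGroup E] [Module ℝ E] {C : ConvexCone ℝ W} {p : W} {D : E →ₗ[ℝ] W}
  {g : E →ₗ[ℝ] ℝ}

lemma exists_dual_ne_zero_of_forall_mem_interior (hC : (interior (C : Set W)).Nonempty)
    (hg : g ≠ 0) (h : ∀ b, p + D b ∈ interior (C : Set W) → 0 ≤ g b) :
    ∃ ψ : StrongDual ℝ W, ψ ≠ 0 ∧ (∀ w ∈ C, 0 ≤ ψ w) ∧ ψ p ≤ 0 ∧ ∀ b, g b < 0 → ψ (D b) ≤ 0 := by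
  obtain ⟨b₁, hb₁⟩ := LinearMap.surjective hg (-1)
  have hconv : Convex ℝ ((fun b => p + D b) '' {b | g b < 0}) := by
    rw [← image_image (fun w => p + w) D]
    exact ((convex_halfSpace_lt g.isLinear 0).linear_image D).translate p
  have hdisj : Disjoint (interior (C : Set W)) ((fun b => p + D b) '' {b | g b < 0}) := by
    rw [disjoint_right]
    rintro _ ⟨b, hb, rfl⟩ hmem
    exact (h b hmem).not_gt hb
  obtain ⟨f, u, hf, hfC, hfD⟩ := geometric_hahn_banach_of_nonempty_interior C.convex hconv hdisj hC
    ⟨_, b₁, by simp [hb₁], rfl⟩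
  have hcone (w : W) (hw : w ∈ C) : 0 ≤ u ∧ 0 ≤ -f w := by
    refine nonneg_and_nonneg_of_forall_pos_add_mul fun t ht => ?_
    have := hfC _ (C.smul_mem ht hw)
    rw [map_smul, smul_eq_mul] at this
    linarith
  have hu : 0 ≤ u := (hcone _ (interior_subset hC.some_mem)).1
  have hray (b : E) (hb : g b < 0) : 0 ≤ f p ∧ 0 ≤ f (D b) := by
    refine nonneg_and_nonneg_of_forall_pos_add_mul fun t ht => ?_
    have := hfD _ ⟨t • b, by simpa using mul_neg_of_pos_of_neg ht hb, rfl⟩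
    simp only [map_add, map_smul, smul_eq_mul] at this
    linarith
  refine ⟨-f, neg_ne_zero.2 hf, fun w hw => (hcone w hw).2, ?_, fun b hb => ?_⟩
  · simpa using (hray b₁ (by simp [hb₁])).1
  · simpa using (hray b hb).2

theorem exists_multiplier_of_forall_mem_interior {b₀ : E} (hb₀ : p + D b₀ ∈ interior (C : Set W))
    (h : ∀ b, p + D b ∈ interior (C : Set W) → 0 ≤ g b) :
    ∃ ψ : StrongDual ℝ W, (∀ w ∈ C, 0 ≤ ψ w) ∧ ψ p ≤ 0 ∧ ∀ b, g b = ψ (D b) := by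
  by_cases hg : g = 0
  · exact ⟨0, by simp [hg]⟩
  obtain ⟨ψ, hψ, hψC, hψp, hψD⟩ := exists_dual_ne_zero_of_forall_mem_interior ⟨_, hb₀⟩ hg h
  obtain ⟨r, hr, hrg⟩ :=
    exists_nonneg_smul_eq_of_forall_neg_imp_nonpos (h := ψ.toLinearMap ∘ₗ D) hg hψD
  replace hrg (b : E) : ψ (D b) = r * g b := LinearMap.congr_fun hrg b
  have hr_ne : r ≠ 0 := by
    rintro rfl
    have := pos_of_mem_interior_of_forall_nonneg hψ hψC hb₀
    rw [map_add, hrg] at this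
    linarith
  refine ⟨r⁻¹ • ψ, fun w hw => ?_, ?_, fun b => ?_⟩
  · exact mul_nonneg (inv_nonneg.2 hr) (hψC w hw)
  · exact mul_nonpos_of_nonneg_of_nonpos (inv_nonneg.2 hr) hψp
  · simp [hrg, hr_ne]

end LinearConstraint

section NonlinearConstraint

variable [NormedAddCommGroup W] [NormedSpace ℝ W] {C : ConvexCone ℝ W} {S : E → W} {x : E}

/- `S (x + t b)` is the convex combination `(1 - t) S x + t (S x + (S (x + t b) - S x) / t)`, whose
second point tends to the interior point `S x + w`. -/
lemma eventually_mem_cone_of_add_mem_interior [AddCommGroup E] [Module ℝ E] {w : W} {b : E}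
    (hS : HasLineDerivAt ℝ S w x b) (hx : S x ∈ C) (hw : S x + w ∈ interior (C : Set W)) :
    ∀ᶠ t : ℝ in 𝓝[>] 0, S (x + t • b) ∈ C := by
  have hslope : Tendsto (fun t : ℝ => S x + t⁻¹ • (S (x + t • b) - S x)) (𝓝[>] 0) (𝓝 (S x + w)) :=
    hS.tendsto_slope_zero_right.const_add _
  filter_upwards [hslope (mem_interior_iff_mem_nhds.1 hw), Ioo_mem_nhdsGT zero_lt_one]
    with t hmem ⟨ht₀, ht₁⟩
  have hcomb : S (x + t • b) = (1 - t) • S x + t • (S x + t⁻¹ • (S (x + t • b) - S x)) := by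
    rw [smul_add, smul_inv_smul₀ ht₀.ne']
    module
  rw [hcomb]
  exact C.convex hx hmem (sub_nonneg.2 ht₁.le) ht₀.le (by ring)

theorem exists_multiplier_of_isLocalMinOn [NormedAddCommGroup E] [NormedSpace ℝ E] {f : E → ℝ}
    {f' : StrongDual ℝ E} {S' : E →L[ℝ] W} (hmin : IsLocalMinOn f {y | S y ∈ C} x)
    (hf : HasFDerivAt f f' x) (hS : HasFDerivAt S S' x) (hx : S x ∈ C) {b₀ : E}
    (hb₀ : S x + S' b₀ ∈ interior (C : Set W)) :
    ∃ ψ : StrongDual ℝ W, (∀ w ∈ C, 0 ≤ ψ w) ∧ ψ (S x) = 0 ∧ ∀ b, f' b = ψ (S' b) := by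
  have hdescent (b : E) (hb : S x + S' b ∈ interior (C : Set W)) : 0 ≤ f' b :=
    hmin.hasFDerivWithinAt_nonneg hf.hasFDerivWithinAt <| mem_posTangentConeAt_of_frequently_mem
      (eventually_mem_cone_of_add_mem_interior (hS.hasLineDerivAt b) hx hb).frequently
  obtain ⟨ψ, hψC, hψx, hψ⟩ := exists_multiplier_of_forall_mem_interior (D := S'.toLinearMap)
    (g := f'.toLinearMap) hb₀ hdescent
  exact ⟨ψ, hψC, hψx.antisymm (hψC _ hx), hψ⟩

end NonlinearConstraint

end Multiplier

section Semidefinite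

variable {ι : Type*} [Fintype ι]

/-- The cone of real square matrices with nonnegative quadratic form. Its symmetric elements are the
positive semidefinite matrices; unlike these, it has interior points in the space of all matrices,
and its dual cone under the trace pairing is the cone of positive semidefinite matrices. -/
def quadFormNonnegCone (ι : Type*) [Fintype ι] : ConvexCone ℝ (Matrix ι ι ℝ) where
  carrier := {A | ∀ v, 0 ≤ v ⬝ᵥ A *ᵥ v}
  smul_mem' r hr A hA v := by
    rw [smul_mulVec, dotProduct_smul]
    exact mul_nonneg hr.le (hA v)
  add_mem' A hA B hB v := by
    rw [add_mulVec, dotProduct_add]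
    exact add_nonneg (hA v) (hB v)

lemma mem_quadFormNonnegCone {A : Matrix ι ι ℝ} :
    A ∈ quadFormNonnegCone ι ↔ ∀ v, 0 ≤ v ⬝ᵥ A *ᵥ v := Iff.rfl

lemma posSemidef_iff_mem_quadFormNonnegCone {A : Matrix ι ι ℝ} (hA : A.IsSymm) :
    A.PosSemidef ↔ A ∈ quadFormNonnegCone ι := by
  simp [posSemidef_iff_dotProduct_mulVec, mem_quadFormNonnegCone, isHermitian_iff_isSymm, hA]

lemma sub_transpose_mem_quadFormNonnegCone (A : Matrix ι ι ℝ) :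
    A - Aᵀ ∈ quadFormNonnegCone ι := fun v => by
  rw [sub_mulVec, dotProduct_sub, mulVec_transpose, dotProduct_comm v (v ᵥ* A), dotProduct_mulVec,
    sub_self]

lemma mem_interior_quadFormNonnegCone {A : Matrix ι ι ℝ} (hA : A.PosDef) :
    A ∈ interior (quadFormNonnegCone ι : Set (Matrix ι ι ℝ)) := by
  have hsphere : ∀ᶠ B in 𝓝 A, ∀ v ∈ Metric.sphere (0 : ι → ℝ) 1, 0 < v ⬝ᵥ B *ᵥ v := by
    refine (isCompact_sphere 0 1).eventually_forall_of_forall_eventually fun v hv => ?_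
    have hcont : Continuous fun z : Matrix ι ι ℝ × (ι → ℝ) => z.2 ⬝ᵥ z.1 *ᵥ z.2 :=
      continuous_snd.dotProduct (continuous_fst.matrix_mulVec continuous_snd)
    refine hcont.continuousAt.eventually (lt_mem_nhds ?_)
    simpa using hA.dotProduct_mulVec_pos (ne_zero_of_mem_unit_sphere ⟨v, hv⟩)
  rw [mem_interior_iff_mem_nhds]
  filter_upwards [hsphere] with B hB v
  obtain rfl | hv := eq_or_ne v 0
  · simp
  · have := hB (‖v‖⁻¹ • v) (by simp [norm_smul, hv])
    rw [mulVec_smul, smul_dotProduct, dotProduct_smul, smul_smul, smul_eq_mul] at this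
    exact (pos_of_mul_pos_right this (mul_self_nonneg _)).le

lemma exists_forall_eq_trace_mul {R κ : Type*} [CommSemiring R] [Fintype κ]
    (f : Matrix κ ι R →ₗ[R] R) : ∃ Λ : Matrix ι κ R, ∀ A, f A = (A * Λ).trace := by
  classical
  refine ⟨of fun i k => f (single k i 1), fun A => ?_⟩
  suffices f = traceLinearMap κ R R ∘ₗ mulRightLinearMap κ R (of fun i k => f (single k i 1)) from
    LinearMap.congr_fun this A
  refine ext_linearMap R fun k i => LinearMap.ext_ring ?_
  simp [trace_single_mul]

theorem exists_posSemidef_forall_eq_trace_mul {ψ : Matrix ι ι ℝ →ₗ[ℝ] ℝ}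
    (hψ : ∀ A ∈ quadFormNonnegCone ι, 0 ≤ ψ A) :
    ∃ Λ : Matrix ι ι ℝ, Λ.PosSemidef ∧ ∀ A, ψ A = (A * Λ).trace := by
  obtain ⟨Λ, hΛ⟩ := exists_forall_eq_trace_mul ψ
  have transpose_le (A : Matrix ι ι ℝ) : ψ Aᵀ ≤ ψ A := by
    simpa using hψ _ (sub_transpose_mem_quadFormNonnegCone A)
  have hsymm : Λ.IsSymm := by
    refine ext_iff_trace_mul_left.2 fun A => ?_
    calc (A * Λᵀ).trace = (Aᵀ * Λ).trace := by
          rw [← trace_transpose, transpose_mul, transpose_transpose, trace_mul_comm]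
      _ = ψ Aᵀ := (hΛ _).symm
      _ = ψ A := (transpose_le A).antisymm (transpose_le Aᵀ)
      _ = (A * Λ).trace := hΛ A
  refine ⟨Λ, .of_dotProduct_mulVec_nonneg (isHermitian_iff_isSymm.2 hsymm) fun v => ?_, hΛ⟩
  calc 0 ≤ ψ (vecMulVec v (star v)) :=
        hψ _ fun w => by simpa using (posSemidef_vecMulVec_self_star v).dotProduct_mulVec_nonneg w
    _ = star v ⬝ᵥ Λ *ᵥ v := by
      rw [hΛ, vecMulVec_mul, trace_vecMulVec, dotProduct_comm, dotProduct_mulVec]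

open scoped MatrixOrder ComplexOrder in
/- If `A = CᴴC` and `B = EᴴE`, the trace of `A * B` is the squared Frobenius norm of `C * Eᴴ`. -/
lemma posSemidef_mul_eq_zero_of_trace_mul_eq_zero {𝕜 : Type*} [RCLike 𝕜] {A B : Matrix ι ι 𝕜}
    (hA : A.PosSemidef) (hB : B.PosSemidef) (h : (A * B).trace = 0) : A * B = 0 := by
  classical
  obtain ⟨C, rfl⟩ := CStarAlgebra.nonneg_iff_eq_star_mul_self.1 hA.nonneg
  obtain ⟨E, rfl⟩ := CStarAlgebra.nonneg_iff_eq_star_mul_self.1 hB.nonneg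
  simp only [star_eq_conjTranspose] at h ⊢
  have htrace : ((C * Eᴴ) * (C * Eᴴ)ᴴ).trace = 0 := by
    rw [← h, conjTranspose_mul, conjTranspose_conjTranspose, ← Matrix.mul_assoc, trace_mul_comm]
    simp only [Matrix.mul_assoc]
  have hCE : C * Eᴴ = 0 := trace_mul_conjTranspose_self_eq_zero_iff.1 htrace
  rw [Matrix.mul_assoc, ← Matrix.mul_assoc C, hCE, Matrix.zero_mul, Matrix.mul_zero]

open scoped Matrix.Norms.Elementwise in
theorem exists_posSemidef_multiplier_of_isLocalMinOn {E : Type*} [NormedAddCommGroup E]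
    [NormedSpace ℝ E] {f : E → ℝ} {f' : StrongDual ℝ E} {G : E → Matrix ι ι ℝ}
    {G' : E →L[ℝ] Matrix ι ι ℝ} {x : E} (hsymm : ∀ y, (G y).IsSymm)
    (hmin : IsLocalMinOn f {y | (-G y).PosSemidef} x) (hf : HasFDerivAt f f' x)
    (hG : HasFDerivAt G G' x) (hx : (-G x).PosSemidef) {b₀ : E} (hb₀ : (-(G x + G' b₀)).PosDef) :
    ∃ Λ : Matrix ι ι ℝ, Λ.PosSemidef ∧ Λ * G x = 0 ∧ ∀ b, f' b + (G' b * Λ).trace = 0 := by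
  simp only [posSemidef_iff_mem_quadFormNonnegCone (hsymm _).neg] at hmin
  have hb₀_mem : -G x + (-G') b₀ ∈ interior (quadFormNonnegCone ι : Set (Matrix ι ι ℝ)) := by
    rw [_root_.neg_apply, ← neg_add]
    exact mem_interior_quadFormNonnegCone hb₀
  obtain ⟨ψ, hψC, hψx, hψ⟩ := exists_multiplier_of_isLocalMinOn hmin hf hG.neg
    ((posSemidef_iff_mem_quadFormNonnegCone (hsymm x).neg).1 hx) hb₀_mem
  obtain ⟨Λ, hΛ, hψΛ⟩ := exists_posSemidef_forall_eq_trace_mul (ψ := ψ.toLinearMap) hψC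
  replace hψΛ (A : Matrix ι ι ℝ) : ψ A = (A * Λ).trace := hψΛ A
  refine ⟨Λ, hΛ, ?_, fun b => ?_⟩
  · have htrace : (Λ * -G x).trace = 0 := by rw [trace_mul_comm, ← hψΛ, hψx]
    simpa using posSemidef_mul_eq_zero_of_trace_mul_eq_zero hΛ hx htrace
  · have hstat : f' b = -ψ (G' b) := (hψ b).trans (map_neg ψ _)
    rw [hstat, hψΛ, neg_add_cancel]

end Semidefinite

section BilinearPencil

variable {n m : ℕ} {F0 : Matrix (Fin m) (Fin m) ℝ} {K : Fin n → Matrix (Fin m) (Fin m) ℝ}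
  {L : Fin n → Fin n → Matrix (Fin m) (Fin m) ℝ}

lemma isSymm_pencil (hF0 : F0.IsSymm) (hK : ∀ k, (K k).IsSymm) (hL : ∀ i j, (L i j).IsSymm)
    (x : Fin n → ℝ) (X : Matrix (Fin n) (Fin n) ℝ) : (pencil F0 K L x X).IsSymm := by
  simp [pencil, IsSymm, transpose_sum, hF0.eq, (hK _).eq, (hL _ _).eq]

open scoped Matrix.Norms.Elementwise

/-- The linear map `b ↦ ∑ₖ bₖ (Kₖ + δₖ(x))`: for symmetric `L`, the Fréchet derivative at `x` of
`y ↦ p(y, yyᵀ)`. -/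
def pencilDeriv (K : Fin n → Matrix (Fin m) (Fin m) ℝ)
    (L : Fin n → Fin n → Matrix (Fin m) (Fin m) ℝ) (x : Fin n → ℝ) :
    (Fin n → ℝ) →L[ℝ] Matrix (Fin m) (Fin m) ℝ :=
  ∑ k, (ContinuousLinearMap.proj k : (Fin n → ℝ) →L[ℝ] ℝ).smulRight (K k + deltaMat L k x)

lemma pencilDeriv_apply (x b : Fin n → ℝ) :
    pencilDeriv K L x b = ∑ k, b k • (K k + deltaMat L k x) := by
  simp [pencilDeriv]

lemma pencilDeriv_single (x : Fin n → ℝ) (k : Fin n) :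
    pencilDeriv K L x (Pi.single k 1) = K k + deltaMat L k x := by
  simp [pencilDeriv_apply, Pi.single_apply, -smul_add]

lemma pencilDeriv_apply_of_symm (hLsy : ∀ i j, L i j = L j i) (x b : Fin n → ℝ) :
    pencilDeriv K L x b = ∑ k, b k • K k + ∑ i, ∑ j, (x i * b j + x j * b i) • L i j := by
  have hswap : ∑ i, ∑ j, (x i * b j) • L i j = ∑ i, ∑ j, (x j * b i) • L i j := by
    rw [Finset.sum_comm]
    exact Finset.sum_congr rfl fun i _ => Finset.sum_congr rfl fun j _ => by rw [hLsy]
  simp only [add_smul, Finset.sum_add_distrib]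
  rw [hswap, ← two_smul ℝ, pencilDeriv_apply]
  simp only [deltaMat, smul_add, Finset.sum_add_distrib, Finset.smul_sum, smul_smul, mul_comm,
    mul_assoc, mul_left_comm]

lemma hasFDerivAt_pencil (hLsy : ∀ i j, L i j = L j i) (x : Fin n → ℝ) :
    HasFDerivAt (fun y => pencil F0 K L y (vecMulVec y y)) (pencilDeriv K L x) x := by
  have hcoord (k : Fin n) :
      HasFDerivAt (fun y : Fin n → ℝ => y k) (.proj (R := ℝ) (φ := fun _ => ℝ) k) x :=
    hasFDerivAt_apply k x
  have hlin := HasFDerivAt.fun_sum (u := Finset.univ) fun k _ => (hcoord k).smul_const (K k)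
  have hquad := HasFDerivAt.fun_sum (u := Finset.univ) fun i _ =>
    HasFDerivAt.fun_sum (u := Finset.univ) fun j _ =>
      ((hcoord i).mul (hcoord j)).smul_const (L i j)
  refine ((hlin.const_add F0).add hquad).congr_fderiv ?_
  ext1 b
  refine Eq.trans ?_ (pencilDeriv_apply_of_symm hLsy x b).symm
  simp

lemma hasFDerivAt_penObj (c xc : Fin n → ℝ) (η : ℝ) (x : Fin n → ℝ) :
    HasFDerivAt (penObj c xc η)
      (∑ k, (c + (2 * η) • (x - xc)) k • (ContinuousLinearMap.proj k : (Fin n → ℝ) →L[ℝ] ℝ)) x := by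
  have hobj : penObj c xc η = fun y => ∑ k, (c k * y k + η * (y k - xc k) ^ 2) := by
    ext y
    simp [penObj, vecNorm, Real.sq_sqrt (Finset.sum_nonneg fun i _ => sq_nonneg (y i - xc i)),
      dotProduct, Finset.sum_add_distrib, Finset.mul_sum]
  rw [hobj]
  refine HasFDerivAt.fun_sum fun k _ => ?_
  have hcoord : HasFDerivAt (fun y : Fin n → ℝ => y k) (.proj (R := ℝ) (φ := fun _ => ℝ) k) x :=
    hasFDerivAt_apply k x
  refine ((hcoord.const_mul (c k)).add
    (((hcoord.sub_const (xc k)).pow 2).const_mul η)).congr_fderiv ?_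
  ext b
  simp only [Nat.add_one_sub_one, pow_one, nsmul_eq_mul, Nat.cast_ofNat, _root_.add_apply,
    _root_.smul_apply, ContinuousLinearMap.proj_apply, smul_eq_mul, Pi.add_apply, Pi.smul_apply,
    Pi.sub_apply]
  ring

lemma trace_pencilDeriv_single_mul (Λ : Matrix (Fin m) (Fin m) ℝ) (x : Fin n → ℝ) (k : Fin n) :
    (pencilDeriv K L x (Pi.single k 1) * Λ).trace =
      (K k * Λ).trace + 2 * (alphaMat L Λ *ᵥ x) k := by
  rw [pencilDeriv_single]
  simp [deltaMat, alphaMat, mulVec, dotProduct, Matrix.add_mul, Finset.sum_mul, trace_sum, mul_comm]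

theorem bmi_lemma_four_general (hF0 : F0.IsSymm) (hK : ∀ k, (K k).IsSymm)
    (hL : ∀ i j, (L i j).IsSymm) (hLsy : ∀ i j, L i j = L j i) {c xc : Fin n → ℝ} {η : ℝ}
    {x : Fin n → ℝ} (hx : x ∈ feasSet F0 K L)
    (hmin : IsLocalMinOn (penObj c xc η) (feasSet F0 K L) x) (hmfcq : MFCQ F0 K L x) :
    ∃ Λ : Matrix (Fin m) (Fin m) ℝ, KKT F0 K L c xc η x Λ := by
  obtain ⟨b₀, hb₀⟩ := hmfcq
  rw [← pencilDeriv_apply] at hb₀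
  obtain ⟨Λ, hΛ, hcompl, hstat⟩ := exists_posSemidef_multiplier_of_isLocalMinOn
    (fun y => isSymm_pencil hF0 hK hL y (vecMulVec y y)) hmin (hasFDerivAt_penObj c xc η x)
    (hasFDerivAt_pencil hLsy x) hx hb₀
  refine ⟨Λ, isHermitian_iff_isSymm.1 hΛ.isHermitian, hΛ, ?_, hcompl⟩
  ext k
  have hk := hstat (Pi.single k 1)
  rw [trace_pencilDeriv_single_mul] at hk
  simpa [Pi.single_apply, add_assoc] using hk

end BilinearPencil

theorem bmi_lemma_four {n m : ℕ} (hn : 0 < n) (hm : 0 < m)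
    (F0 : Matrix (Fin m) (Fin m) ℝ)
    (K : Fin n → Matrix (Fin m) (Fin m) ℝ)
    (L : Fin n → Fin n → Matrix (Fin m) (Fin m) ℝ)
    (hF0 : F0.IsSymm) (hK : ∀ k, (K k).IsSymm)
    (hL : ∀ i j, (L i j).IsSymm) (hLsy : ∀ i j, L i j = L j i)
    (c xc : Fin n → ℝ)
    (η : ℝ) (hη : 0 < η)
    (xs : Fin n → ℝ)
    (hopt : IsOptPen F0 K L c xc η xs)
    (hmfcq : MFCQ F0 K L xs) :
    ∃ Λ : Matrix (Fin m) (Fin m) ℝ, KKT F0 K L c xc η xs Λ := by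
  exact bmi_lemma_four_general hF0 hK hL hLsy hopt.1 (IsMinOn.localize hopt.2) hmfcq
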